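/- arXiv:math/0611820 — 4 statements merged into one kernel-verified Lean document; each statement's English description precedes it below -/
import Mathlib

section
/- Let F be a number field with ring of integers O_F, let m be a positive integer, and let u ∈ O_F with u·O_F + m·O_F = O_F. Let t be a positive integer such that m divides t, t ≥ m + 4, and u^t ≡ 1 (mod m²·O_F). Then there exist elements c, d ∈ O_F such that m·(c·u^{t−1} + d·m^{t−1}) = 1 − u^t, c ∈ m·O_F, and d·O_F + m·O_F = O_F. -/
open NumberField

/-!
Write `u ^ t - 1 = m ^ 2 * v`, so that `u` is coprime to `m`. It suffices to solve the linear
equation `c * u ^ (t - 1) + d * m ^ (t - 1) = -(m * v)`. Modulo `m` it has the solution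
`(c, d) = (0, 1)`, since `t ≥ 2`. As `u ^ (t - 1)` and `m ^ (t - 1)` are coprime, that solution
lifts to an exact one, and `d ≡ 1` modulo `m` makes `d` coprime to `m`.
-/

section CommRing

variable {R : Type*} [CommRing R]

lemma isCoprime_of_dvd_sub_one {a n : R} (h : n ∣ a - 1) : IsCoprime a n := by
  simpa only [sub_add_cancel] using IsCoprime.add_one_left_of_dvd h

lemma exists_mul_add_mul_eq_of_isCoprime_of_dvd_sub {a b n p q z : R} (hab : IsCoprime a b)
    (h : n ∣ z - (p * a + q * b)) :
    ∃ c d : R, c * a + d * b = z ∧ n ∣ c - p ∧ n ∣ d - q := by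
  obtain ⟨k, hk⟩ := h
  obtain ⟨r, s, hrs⟩ := hab
  refine ⟨p + n * (k * r), q + n * (k * s), ?_, ?_, ?_⟩
  · linear_combination n * k * hrs - hk
  · simp only [add_sub_cancel_left, dvd_mul_right]
  · simp only [add_sub_cancel_left, dvd_mul_right]

theorem capitulation_stmt2_general {u m : R} {t : ℕ} (ht : 2 ≤ t) (hut : m ^ 2 ∣ u ^ t - 1) :
    ∃ c d : R, m * (c * u ^ (t - 1) + d * m ^ (t - 1)) = 1 - u ^ t ∧ m ∣ c ∧ IsCoprime d m := by
  have hu : IsCoprime u m :=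
    (IsCoprime.pow_left_iff (by lia)).mp
      (isCoprime_of_dvd_sub_one ((dvd_pow_self m two_ne_zero).trans hut))
  obtain ⟨v, hv⟩ := hut
  have solution_mod : m ∣ -(m * v) - (0 * u ^ (t - 1) + 1 * m ^ (t - 1)) := by
    rw [zero_mul, zero_add, one_mul]
    exact dvd_sub (dvd_mul_right m v).neg_right (dvd_pow_self m (by lia))
  obtain ⟨c, d, hcd, hc, hd⟩ :=
    exists_mul_add_mul_eq_of_isCoprime_of_dvd_sub hu.pow solution_mod
  refine ⟨c, d, ?_, by rwa [sub_zero] at hc, isCoprime_of_dvd_sub_one hd⟩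
  linear_combination m * hcd + hv

end CommRing

/-- Let `F` be a number field with ring of integers `𝓞 F`, let `m` be a positive
integer, and let `u ∈ 𝓞 F` with `u·𝓞_F + m·𝓞_F = 𝓞_F`. Let `t` be a positive integer such that
`m ∣ t`, `t ≥ m + 4` and `u ^ t ≡ 1 (mod m² 𝓞_F)`. Then there exist `c, d ∈ 𝓞 F` such that
`m * (c * u ^ (t - 1) + d * m ^ (t - 1)) = 1 - u ^ t`, `c ∈ m 𝓞_F` and `d 𝓞_F + m 𝓞_F = 𝓞_F`. -/
theorem capitulation_stmt2
    (F : Type*) [Field F] [NumberField F]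
    (m t : ℕ) (hm : 0 < m) (ht : 0 < t)
    (u : 𝓞 F) (hu : IsCoprime u (m : 𝓞 F))
    (hmt : m ∣ t) (ht4 : m + 4 ≤ t)
    (hut : u ^ t - 1 ∈ Ideal.span {((m : 𝓞 F)) ^ 2}) :
    ∃ c d : 𝓞 F,
      (m : 𝓞 F) * (c * u ^ (t - 1) + d * (m : 𝓞 F) ^ (t - 1)) = 1 - u ^ t ∧
      c ∈ Ideal.span {(m : 𝓞 F)} ∧
      IsCoprime d (m : 𝓞 F) := by
  simp only [Ideal.mem_span_singleton] at hut ⊢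
  exact capitulation_stmt2_general (by lia) hut
end

section
/- Let F be a number field with ring of integers O_F, let m and t be positive integers with t ≥ m + 4, and let u, c, d ∈ O_F satisfy m·(c·u^{t−1} + d·m^{t−1}) = 1 − u^t. Let f(X) = X^t + c·X^{t−1} − m·X^{m+2} + u·X^{m+1} + d ∈ O_F[X]. Let L be a finite field extension of F containing a root θ of f, with ring of integers O_L. Then θ ∈ O_L, the element ε = u − m·θ is a unit of O_L, and ε ≡ u (mod m·O_L). -/
open NumberField Polynomial

/-!
The number `m ^ t * f (u / m)` is the value at `u` of the polynomial whose roots are the `m * θ`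
with `θ` a root of `f`, so it is divisible by `u - m * θ`. In `f`, the terms `-m * X ^ (m + 2)` and
`u * X ^ (m + 1)` cancel at `u / m`, which leaves
`u ^ t + m * (c * u ^ (t - 1) + d * m ^ (t - 1)) = 1`.
-/

theorem eval_scaleRoots_eq_eval_homogenize {R : Type*} [CommSemiring R] (p : R[X]) (a b : R) :
    (p.scaleRoots b).eval a = MvPolynomial.eval ![a, b] (p.homogenize p.natDegree) := by
  rw [eval_eq_sum_range, natDegree_scaleRoots, homogenize, map_sum,
    Finset.Nat.sum_antidiagonal_eq_sum_range_succ_mk]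
  refine Finset.sum_congr rfl fun i _ ↦ ?_
  simp [MvPolynomial.eval_monomial, mul_assoc, mul_comm (a ^ i)]

section ScaleRoots

variable {R S : Type*} [CommRing R] [CommRing S] [Algebra R S] {p : R[X]} {x : S}

theorem algebraMap_sub_algebraMap_mul_dvd_eval_scaleRoots (hx : aeval x p = 0) (a b : R) :
    algebraMap R S a - algebraMap R S b * x ∣ algebraMap R S ((p.scaleRoots b).eval a) := by
  have hroot : aeval (algebraMap R S b * x) (p.scaleRoots b) = 0 := scaleRoots_aeval_eq_zero hx
  simpa only [eval_map_algebraMap, aeval_algebraMap_apply_eq_algebraMap_eval, hroot, sub_zero]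
    using sub_dvd_eval_sub (algebraMap R S a) (algebraMap R S b * x)
      ((p.scaleRoots b).map (algebraMap R S))

theorem isUnit_algebraMap_sub_algebraMap_mul_of_isUnit_eval_scaleRoots (hx : aeval x p = 0)
    {a b : R} (h : IsUnit ((p.scaleRoots b).eval a)) :
    IsUnit (algebraMap R S a - algebraMap R S b * x) :=
  isUnit_of_dvd_unit (algebraMap_sub_algebraMap_mul_dvd_eval_scaleRoots hx a b)
    (h.map (algebraMap R S))

end ScaleRoots

theorem exists_algebraMap_eq_and_aeval_eq_zero_of_monic {R T : Type*} (S : Type*) [CommRing R]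
    [CommRing S] [CommRing T] [Algebra R S] [Algebra S T] [Algebra R T] [IsScalarTower R S T]
    [IsIntegralClosure S R T] {p : R[X]} (hp : p.Monic) {x : T} (hx : aeval x p = 0) :
    ∃ y : S, algebraMap S T y = x ∧ aeval y p = 0 := by
  obtain ⟨y, rfl⟩ := (IsIntegralClosure.isIntegral_iff (A := S)).mp ⟨p, hp, hx⟩
  refine ⟨y, rfl, IsIntegralClosure.algebraMap_injective S R T ?_⟩
  rwa [map_zero, ← aeval_algebraMap_apply]

section CapitulationPoly

variable {R : Type*} [CommRing R]

/-- The polynomial `f` of the theorem, with the coefficient `m` replaced by a ring element `b` and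
the exponent `m + 1` by an independent natural number `k`. -/
noncomputable def capitulationPoly (t k : ℕ) (b u c d : R) : R[X] :=
  X ^ t + C c * X ^ (t - 1) - C b * X ^ (k + 1) + C u * X ^ k + C d

variable {t k : ℕ} (hkt : k + 1 < t) (b u c d : R)
include hkt

theorem natDegree_capitulationPoly_le : (capitulationPoly t k b u c d).natDegree ≤ t := by
  unfold capitulationPoly
  compute_degree
  all_goals omega

theorem coeff_capitulationPoly_self : (capitulationPoly t k b u c d).coeff t = 1 := by
  have h₀ : t ≠ 0 := by omega
  have hpred : t ≠ t - 1 := by omega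
  have hk : t ≠ k := by omega
  simp [capitulationPoly, coeff_X_pow, coeff_C, h₀, hpred, hk, hkt.ne']

theorem monic_capitulationPoly : (capitulationPoly t k b u c d).Monic :=
  monic_of_natDegree_le_of_coeff_eq_one t (natDegree_capitulationPoly_le hkt b u c d)
    (coeff_capitulationPoly_self hkt b u c d)

theorem natDegree_capitulationPoly [Nontrivial R] :
    (capitulationPoly t k b u c d).natDegree = t :=
  natDegree_eq_of_le_of_coeff_ne_zero (natDegree_capitulationPoly_le hkt b u c d)
    (by simp [coeff_capitulationPoly_self hkt])

theorem eval_scaleRoots_capitulationPoly :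
    ((capitulationPoly t k b u c d).scaleRoots b).eval u =
      u ^ t + b * (c * u ^ (t - 1) + d * b ^ (t - 1)) := by
  nontriviality R
  rw [eval_scaleRoots_eq_eval_homogenize, natDegree_capitulationPoly hkt]
  have hpow : b ^ t = b * b ^ (t - 1) := (mul_pow_sub_one (by omega) b).symm
  have hcancel : b ^ (t - k) = b * b ^ (t - (k + 1)) := by rw [← pow_succ']; congr 1; omega
  have hlinear : b ^ (t - (t - 1)) = b := by rw [Nat.sub_sub_self (by omega), pow_one]
  simp only [capitulationPoly, homogenize_add, homogenize_sub, homogenize_C_mul, homogenize_C,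
    homogenize_X_pow le_rfl, homogenize_X_pow (t.sub_le 1), homogenize_X_pow hkt.le,
    homogenize_X_pow (k.le_succ.trans hkt.le), map_add, map_sub, map_mul, map_pow,
    MvPolynomial.eval_X, MvPolynomial.eval_C, Matrix.cons_val_zero, Matrix.cons_val_one,
    Nat.sub_self, pow_zero, map_one, hpow, hcancel, hlinear]
  ring

end CapitulationPoly

theorem capitulation_stmt4_general {R T : Type*} (S : Type*) [CommRing R] [CommRing S]
    [CommRing T] [Algebra R S] [Algebra S T] [Algebra R T] [IsScalarTower R S T]
    [IsIntegralClosure S R T] {t k : ℕ} (hkt : k + 1 < t) {b u c d : R}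
    (hunit : IsUnit (u ^ t + b * (c * u ^ (t - 1) + d * b ^ (t - 1)))) {θ : T}
    (hθ : aeval θ (capitulationPoly t k b u c d) = 0) :
    (∃ θ' : S, algebraMap S T θ' = θ) ∧
    ∃ ε : Sˣ,
      algebraMap S T ε = algebraMap R T u - algebraMap R T b * θ ∧
      (ε : S) - algebraMap R S u ∈ Ideal.span {algebraMap R S b} := by
  obtain ⟨θ', rfl, hθ'⟩ :=
    exists_algebraMap_eq_and_aeval_eq_zero_of_monic S (monic_capitulationPoly hkt b u c d) hθ
  obtain ⟨ε, hε⟩ : IsUnit (algebraMap R S u - algebraMap R S b * θ') :=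
    isUnit_algebraMap_sub_algebraMap_mul_of_isUnit_eval_scaleRoots hθ'
      (by rwa [eval_scaleRoots_capitulationPoly hkt])
  refine ⟨⟨θ', rfl⟩, ε, ?_, ?_⟩
  · rw [hε, map_sub, map_mul, ← IsScalarTower.algebraMap_apply,
      ← IsScalarTower.algebraMap_apply]
  · rw [hε, sub_sub_cancel_left, neg_mem_iff]
    exact Ideal.mul_mem_right _ _ (Ideal.mem_span_singleton_self _)

/-- with `f(X) = X^t + c X^(t-1) - m X^(m+2) + u X^(m+1) + d ∈ (𝓞 F)[X]` satisfying
`m * (c u^(t-1) + d m^(t-1)) = 1 - u^t`, if `L/F` is a finite extension containing a root `θ`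
of `f`, then `θ ∈ 𝓞 L`, the element `ε = u - m θ` is a unit of `𝓞 L`, and
`ε ≡ u (mod m 𝓞 L)`. -/
theorem capitulation_stmt4
    (F : Type*) [Field F] [NumberField F]
    (m t : ℕ) (hm : 0 < m) (ht : 0 < t) (ht4 : m + 4 ≤ t)
    (u c d : 𝓞 F)
    (heq : (m : 𝓞 F) * (c * u ^ (t - 1) + d * (m : 𝓞 F) ^ (t - 1)) = 1 - u ^ t)
    (L : Type*) [Field L] [Algebra F L] [FiniteDimensional F L]
    (θ : L)
    (hθ : Polynomial.aeval θ
        ((X ^ t + C c * X ^ (t - 1) - C (m : 𝓞 F) * X ^ (m + 2) + C u * X ^ (m + 1) + C d :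
            (𝓞 F)[X]).map (algebraMap (𝓞 F) F)) = 0) :
    (∃ θ' : 𝓞 L, (θ' : L) = θ) ∧
    ∃ ε : (𝓞 L)ˣ,
      ((ε : 𝓞 L) : L) = algebraMap F L (algebraMap (𝓞 F) F u) - (m : L) * θ ∧
      (ε : 𝓞 L) - algebraMap (𝓞 F) (𝓞 L) u ∈ Ideal.span {(m : 𝓞 L)} := by
  rw [aeval_map_algebraMap] at hθ
  have hgeneral := capitulation_stmt4_general (𝓞 L) (by omega) (by simp [heq]) hθ
  rwa [map_natCast, map_natCast] at hgeneral
end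

section
/- Let F be a number field with ring of integers O_F and let H be a finite field extension of F, with ring of integers O_H, such that every nonzero ideal a of O_F becomes principal in O_H (i.e. the ideal a·O_H of O_H is principal). Let M be a finitely generated projective O_F-module of constant rank r. Then M ⊗_{O_F} O_H is a free O_H-module of rank r. -/
open NumberField
open scoped TensorProduct

/-!
A finitely generated torsion-free module `M` over a Dedekind domain `A` is a product of nonzero
ideals: if `M ≠ 0` there is a nonzero functional `M → A`; its image is an ideal, hence projective,
so it splits off and leaves a kernel of smaller rank. Flat base change to `B` turns an ideal `I`
into `IB`. If `IB` is principal, it is free of rank one, because it contains the image of a nonzero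
element of `A`, which is a nonzerodivisor of `B`.
-/

section Splitting

open Module

variable {R V : Type*} [Ring R] [AddCommGroup V] [Module R V]

variable (R V) in
theorem exists_linearMap_range_ne_bot [Projective R V] [Nontrivial V] :
    ∃ f : V →ₗ[R] R, LinearMap.range f ≠ ⊥ := by
  obtain ⟨x, hx⟩ := exists_ne (0 : V)
  obtain ⟨f, hfx⟩ := Projective.exists_dual_ne_zero R hx
  exact ⟨f, fun h ↦ hfx ((Submodule.mem_bot R).mp (h ▸ f.mem_range_self x))⟩

theorem nonempty_linearEquiv_range_prod_ker {W : Type*} [AddCommGroup W] [Module R W]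
    (f : V →ₗ[R] W) [Projective R (LinearMap.range f)] :
    Nonempty (V ≃ₗ[R] LinearMap.range f × LinearMap.ker f) := by
  obtain ⟨s, hs⟩ := projective_lifting_property f.rangeRestrict LinearMap.id
    f.surjective_rangeRestrict
  have exact_rangeRestrict : Function.Exact (LinearMap.ker f).subtype f.rangeRestrict :=
    f.ker_rangeRestrict ▸ f.rangeRestrict.exact_subtype_ker_map
  let splitting := exact_rangeRestrict.splitSurjectiveEquiv (LinearMap.ker f).subtype_injective
  exact ⟨(splitting ⟨s, hs⟩).1 ≪≫ₗ LinearEquiv.prodComm R _ _⟩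

end Splitting

section FiniteModules

open Module
open scoped nonZeroDivisors

variable {A : Type*} [CommRing A] {M : Type*} [AddCommGroup M] [Module A M]

variable (A M) in
theorem projective_of_finite_of_isTorsionFree [IsDedekindDomain A] [Module.Finite A M]
    [IsTorsionFree A M] : Projective A M :=
  have := finitePresentation_of_finite A M
  Flat.projective_of_finitePresentation

theorem finrank_ideal_eq_one [IsDomain A] {I : Ideal A} (hI : I ≠ ⊥) : finrank A I = 1 := by
  obtain ⟨a, ha, ha0⟩ := Submodule.exists_mem_ne_zero_of_ne_bot hI
  have smul_quotient_eq_zero (x : A ⧸ I) : a • x = 0 := by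
    obtain ⟨y, rfl⟩ := Ideal.Quotient.mk_surjective x
    exact Ideal.Quotient.eq_zero_iff_mem.mpr (I.mul_mem_right y ha)
  have isTorsion_quotient : IsTorsion A (A ⧸ I) := fun {x} ↦
    ⟨⟨a, mem_nonZeroDivisors_of_ne_zero ha0⟩, smul_quotient_eq_zero x⟩
  simpa only [isTorsion_quotient.finrank_eq_zero, zero_add, finrank_self] using
    Submodule.finrank_quotient_add_finrank I

theorem finrank_eq_of_localizedModule_linearEquiv [IsDomain A] (p : Ideal A) [p.IsPrime] {r : ℕ}
    (e : LocalizedModule p.primeCompl M ≃ₗ[Localization.AtPrime p]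
      (Fin r → Localization.AtPrime p)) : finrank A M = r := by
  have hp : p.primeCompl ≤ A⁰ := p.primeCompl_le_nonZeroDivisors
  rw [← IsLocalizedModule.finrank_eq p.primeCompl (LocalizedModule.mkLinearMap p.primeCompl M) hp,
    ← IsLocalization.finrank_eq (Localization.AtPrime p) p.primeCompl hp, e.finrank_eq,
    finrank_fin_fun]

variable (A M) in
theorem exists_linearEquiv_pi_ideal [IsDedekindDomain A] [Module.Finite A M]
    [IsTorsionFree A M] :
    ∃ I : Fin (finrank A M) → Ideal A, (∀ i, I i ≠ ⊥) ∧ Nonempty (M ≃ₗ[A] ∀ i, I i) := by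
  induction hn : finrank A M generalizing M with
  | zero =>
    have : Subsingleton M := not_nontrivial_iff_subsingleton.mp fun _ ↦
      (finrank_pos (R := A) (M := M)).ne' hn
    exact ⟨finZeroElim, finZeroElim, ⟨0⟩⟩
  | succ n ih =>
    have : Projective A M := projective_of_finite_of_isTorsionFree A M
    have : Nontrivial M := finrank_pos_iff (R := A).mp (hn ▸ n.succ_pos)
    obtain ⟨f, range_ne_bot⟩ := exists_linearMap_range_ne_bot A M
    have : Projective A (LinearMap.range f) := projective_of_finite_of_isTorsionFree A _
    have finrank_ker : finrank A (LinearMap.ker f) = n := by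
      have rank_nullity := Submodule.finrank_quotient_add_finrank (LinearMap.ker f)
      rw [f.quotKerEquivRange.finrank_eq, finrank_ideal_eq_one range_ne_bot] at rank_nullity
      lia
    obtain ⟨split⟩ := nonempty_linearEquiv_range_prod_ker f
    obtain ⟨I, hI, ⟨e⟩⟩ := ih (LinearMap.ker f) finrank_ker
    let J : Fin (n + 1) → Ideal A := Fin.cons (LinearMap.range f) I
    exact ⟨J, Fin.cases range_ne_bot hI,
      ⟨split ≪≫ₗ (LinearEquiv.refl A _).prodCongr e ≪≫ₗ Fin.consLinearEquiv A (fun i ↦ J i)⟩⟩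

end FiniteModules

section BaseChange

open Module
open scoped nonZeroDivisors

theorem nonempty_linearEquiv_self_of_isPrincipal {B : Type*} [CommRing B] {J : Ideal B}
    (hJ : J.IsPrincipal) {b : B} (hbJ : b ∈ J) (hb : b ∈ B⁰) : Nonempty (J ≃ₗ[B] B) := by
  obtain ⟨x, rfl⟩ := hJ
  obtain ⟨c, rfl⟩ := Submodule.mem_span_singleton.mp hbJ
  have hx : x ∈ B⁰ := (mul_mem_nonZeroDivisors.mp hb).2
  have toSpanSingleton_injective : Function.Injective (LinearMap.toSpanSingleton B B x) :=
    fun _ _ ↦ (mul_cancel_right_mem_nonZeroDivisors hx).mp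
  exact ⟨(LinearEquiv.ofInjective _ toSpanSingleton_injective ≪≫ₗ
    LinearEquiv.ofEq _ _ (LinearMap.range_toSpanSingleton x)).symm⟩

variable {A B : Type*} [CommRing A] [CommRing B] [Algebra A B]

variable (B) in
theorem algebraMap_mem_nonZeroDivisors_of_flat [Flat A B] {a : A} (ha : a ∈ A⁰) :
    algebraMap A B a ∈ B⁰ := by
  refine mem_nonZeroDivisors_iff_left.mpr fun b hb ↦ ?_
  rw [← Algebra.smul_def] at hb
  exact (Flat.isSMulRegular_of_nonZeroDivisors ha).right_eq_zero_of_smul hb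

variable (B) in
theorem nonempty_tensorProduct_ideal_linearEquiv_map [Flat A B] (I : Ideal A) :
    Nonempty ((B ⊗[A] I) ≃ₗ[B] I.map (algebraMap A B)) := by
  let rid := TensorProduct.AlgebraTensorModule.rid A B B
  have map_rid : (I.baseChange B).map rid.toLinearMap = I.map (algebraMap A B) := by
    rw [Submodule.baseChange_eq_span, Submodule.map_span]
    simp [rid, Ideal.map, Ideal.span, Set.image_image, Algebra.smul_def]
  exact ⟨Submodule.toBaseChange.toLinearEquiv B I ≪≫ₗ rid.submoduleMap _ ≪≫ₗ
    LinearEquiv.ofEq _ _ map_rid⟩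

theorem nonempty_tensorProduct_ideal_linearEquiv_self [IsDomain A] [Flat A B] {I : Ideal A}
    (hI : I ≠ ⊥) (hIB : (I.map (algebraMap A B)).IsPrincipal) :
    Nonempty ((B ⊗[A] I) ≃ₗ[B] B) := by
  obtain ⟨a, haI, ha⟩ := Submodule.exists_mem_ne_zero_of_ne_bot hI
  obtain ⟨toMap⟩ := nonempty_tensorProduct_ideal_linearEquiv_map B I
  obtain ⟨mapToSelf⟩ := nonempty_linearEquiv_self_of_isPrincipal hIB (Ideal.mem_map_of_mem _ haI)
    (algebraMap_mem_nonZeroDivisors_of_flat B (mem_nonZeroDivisors_of_ne_zero ha))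
  exact ⟨toMap ≪≫ₗ mapToSelf⟩

theorem capitulation_stmt7_general [IsDedekindDomain A] [IsTorsionFree A B]
    (hcap : ∀ a : Ideal A, a ≠ ⊥ → (a.map (algebraMap A B)).IsPrincipal)
    (M : Type*) [AddCommGroup M] [Module A M] [Module.Finite A M] [IsTorsionFree A M] :
    Nonempty ((B ⊗[A] M) ≃ₗ[B] (Fin (finrank A M) → B)) := by
  obtain ⟨I, hI, ⟨e⟩⟩ := exists_linearEquiv_pi_ideal A M
  have factors (i) : Nonempty ((B ⊗[A] I i) ≃ₗ[B] B) :=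
    nonempty_tensorProduct_ideal_linearEquiv_self (hI i) (hcap (I i) (hI i))
  exact ⟨e.baseChange A B M _ ≪≫ₗ TensorProduct.piRight A B B (fun i ↦ I i) ≪≫ₗ
    LinearEquiv.piCongrRight fun i ↦ (factors i).some⟩

end BaseChange

/-- Let `F` be a number field and `H/F` a finite extension in which every nonzero
ideal of `𝓞 F` becomes principal. If `M` is a finitely generated projective `𝓞 F`-module of
constant rank `r` (its localization at every prime is free of rank `r`), then
`M ⊗[𝓞 F] 𝓞 H` is a free `𝓞 H`-module of rank `r`. -/
theorem capitulation_stmt7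
    (F H : Type*) [Field F] [NumberField F] [Field H] [NumberField H]
    [Algebra F H] [FiniteDimensional F H]
    (hcap : ∀ a : Ideal (𝓞 F), a ≠ ⊥ →
      (a.map (algebraMap (𝓞 F) (𝓞 H))).IsPrincipal)
    (M : Type*) [AddCommGroup M] [Module (𝓞 F) M]
    [Module.Finite (𝓞 F) M] [Module.Projective (𝓞 F) M]
    (r : ℕ)
    (hrank : ∀ (p : Ideal (𝓞 F)) [p.IsPrime],
      Nonempty ((LocalizedModule p.primeCompl M) ≃ₗ[Localization.AtPrime p]
        (Fin r → Localization.AtPrime p))) :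
    Nonempty ((𝓞 H ⊗[𝓞 F] M) ≃ₗ[𝓞 H] (Fin r → 𝓞 H)) := by
  obtain rfl := finrank_eq_of_localizedModule_linearEquiv ⊥ (hrank ⊥).some
  exact capitulation_stmt7_general hcap M
end

section
/- Let R be a commutative ring, let A be an R-algebra, let S be a commutative R-algebra that is free of rank k as an R-module, and let N be an A-module. Suppose there exist natural numbers n and m such that (A ⊗_R S)^n ⊕ (N ⊗_R S) is isomorphic to (A ⊗_R S)^{n+m} as modules over A ⊗_R S. Then A^{nk} ⊕ N^{⊕ k} is isomorphic to A^{(n+m)k} as A-modules. -/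
open scoped TensorProduct

section BaseChange

variable {R S A N : Type*} [CommRing R] [CommRing S] [Algebra R S]
  [Ring A] [Algebra R A]
  [AddCommGroup N] [Module R N] [Module A N] [IsScalarTower R A N]

/-- The action of the `R`-algebra `A` on the base change `S ⊗[R] N` of an `A`-module `N`
along `R → S`, acting through the factor `N`, as an algebra homomorphism into the
`S`-linear endomorphisms. -/
noncomputable def baseChangeActionHom : A →ₐ[R] Module.End S (S ⊗[R] N) :=
  (Module.End.baseChangeHom R S N).comp (Algebra.lsmul R R N)

/-- The `A`-module structure on the base change `S ⊗[R] N` (with `A` acting through `N`). -/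
@[local instance 10] noncomputable def baseChangeModuleAux : Module A (S ⊗[R] N) :=
  Module.compHom _ (baseChangeActionHom (R := R) (S := S) (A := A) (N := N)).toRingHom

lemma baseChange_smul_def (a : A) (x : S ⊗[R] N) :
    a • x = baseChangeActionHom (R := R) (S := S) (A := A) (N := N) a x := rfl

lemma bc_smulCommClass : SMulCommClass A S (S ⊗[R] N) where
  smul_comm a s x := by
    rw [baseChange_smul_def, baseChange_smul_def]
    exact (baseChangeActionHom (R := R) (S := S) (A := A) (N := N) a).map_smul s x

lemma bc_isScalarTower : IsScalarTower R A (S ⊗[R] N) where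
  smul_assoc r a x := by
    rw [baseChange_smul_def, baseChange_smul_def, map_smul, LinearMap.smul_apply]

/-- The canonical `A ⊗[R] S`-module structure on the base change `S ⊗[R] N` of an
`A`-module `N` along `R → S`: the factor `A` acts through `N` and `S` acts through `S`. -/
@[local instance] noncomputable def baseChangeModule : Module (A ⊗[R] S) (S ⊗[R] N) := by
  letI i1 : IsScalarTower R S (S ⊗[R] N) := TensorProduct.isScalarTower_left
  letI i2 : SMulCommClass A S (S ⊗[R] N) := bc_smulCommClass
  letI i3 : IsScalarTower R A (S ⊗[R] N) := bc_isScalarTower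
  exact @TensorProduct.Algebra.module R A S (S ⊗[R] N) _ _ TensorProduct.leftModule _ _
    (baseChangeModuleAux) TensorProduct.leftModule _ _ i3 i1 i2

section FreeModule

variable {R A M V ι : Type*} [CommSemiring R] [Semiring A] [Algebra R A]
  [AddCommMonoid M] [Module R M] [Module A M] [IsScalarTower R A M]
  [AddCommMonoid V] [Module R V]

/-- The coordinates of `M ⊗[R] V` in a basis of `V`, as an isomorphism of `A`-modules from
`M ⊗[R] V` onto a direct sum of copies of `M`, where `A` acts on the left tensor factor. -/
noncomputable def tensorEquivFinsuppOfBasis (b : Module.Basis ι R V) :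
    M ⊗[R] V ≃ₗ[A] (ι →₀ M) :=
  open Classical in
  TensorProduct.AlgebraTensorModule.congr (.refl A M) b.repr ≪≫ₗ
    TensorProduct.finsuppScalarRight R A M ι

/-- The isomorphism of `A`-modules between a direct sum of copies of `M ⊗[R] V` and a direct
sum of copies of `M`, given by coordinates in a basis of `V`. -/
noncomputable def finsuppTensorEquivFinsuppProd (κ : Type*) (b : Module.Basis ι R V) :
    (κ →₀ M ⊗[R] V) ≃ₗ[A] (κ × ι →₀ M) :=
  Finsupp.mapRange.linearEquiv (tensorEquivFinsuppOfBasis b) ≪≫ₗ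
    (Finsupp.curryLinearEquiv A).symm

/-- The free module on `Fin n × Fin k` identified with `A ^ (n * k)`, through the
enumeration `finProdFinEquiv` of the basis. -/
noncomputable def finsuppFinProdEquiv (n k : ℕ) :
    (Fin n × Fin k →₀ A) ≃ₗ[A] (Fin (n * k) → A) :=
  Finsupp.domLCongr finProdFinEquiv ≪≫ₗ Finsupp.linearEquivFunOnFinite A A _

end FreeModule

/-- The swap of tensor factors, as an isomorphism of `A`-modules from the base change
`S ⊗[R] N`, with `A` acting through `N`, to `N ⊗[R] S` with its usual left action. -/
noncomputable def baseChangeComm : S ⊗[R] N ≃ₗ[A] N ⊗[R] S where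
  __ := TensorProduct.comm R S N
  map_smul' a x := by
    induction x with
    | zero => simp
    | tmul s y => rfl
    | add x y hx hy => simp_all

lemma isScalarTower_baseChange : IsScalarTower A (A ⊗[R] S) (S ⊗[R] N) where
  smul_assoc a t x := by
    induction t with
    | zero => simp only [smul_zero, zero_smul]
    | tmul c s => exact mul_smul a c (s • x)
    | add t u ht hu => simp only [smul_add, add_smul, ht, hu]

theorem capitulation_stmt10_general {ι κ τ : Type*} (b : Module.Basis ι R S)
    (e : ((κ →₀ A ⊗[R] S) × (S ⊗[R] N)) ≃ₗ[A ⊗[R] S] (τ →₀ A ⊗[R] S)) :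
    Nonempty (((κ × ι →₀ A) × (ι →₀ N)) ≃ₗ[A] (τ × ι →₀ A)) := by
  have : IsScalarTower A (A ⊗[R] S) (S ⊗[R] N) := isScalarTower_baseChange
  let source : ((κ →₀ A ⊗[R] S) × (S ⊗[R] N)) ≃ₗ[A] ((κ × ι →₀ A) × (ι →₀ N)) :=
    (finsuppTensorEquivFinsuppProd κ b).prodCongr
      (baseChangeComm ≪≫ₗ tensorEquivFinsuppOfBasis b)
  exact ⟨source.symm ≪≫ₗ e.restrictScalars A ≪≫ₗ finsuppTensorEquivFinsuppProd τ b⟩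

/-- let `R` be a commutative ring, `A` an `R`-algebra, `S` a commutative
`R`-algebra which is free of rank `k` as an `R`-module, and `N` an `A`-module. If
`(A ⊗[R] S)^n ⊕ (N ⊗[R] S) ≅ (A ⊗[R] S)^(n+m)` as `A ⊗[R] S`-modules (here the base change
of `N` is written `S ⊗[R] N`), then `A^(n*k) ⊕ N^(⊕ k) ≅ A^((n+m)*k)` as `A`-modules. -/
theorem capitulation_stmt10
    (k n m : ℕ)
    (hS : Nonempty (S ≃ₗ[R] (Fin k → R)))
    (h : Nonempty (((Fin n → (A ⊗[R] S)) × (S ⊗[R] N)) ≃ₗ[A ⊗[R] S]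
      (Fin (n + m) → (A ⊗[R] S)))) :
    Nonempty (((Fin (n * k) → A) × (Fin k → N)) ≃ₗ[A] (Fin ((n + m) * k) → A)) := by
  obtain ⟨b⟩ := hS
  obtain ⟨e⟩ := h
  let powEquiv (l : ℕ) := Finsupp.linearEquivFunOnFinite (A ⊗[R] S) (A ⊗[R] S) (Fin l)
  obtain ⟨f⟩ := capitulation_stmt10_general (.ofEquivFun b)
    ((powEquiv n).prodCongr (.refl _ _) ≪≫ₗ e ≪≫ₗ (powEquiv (n + m)).symm)
  exact ⟨((finsuppFinProdEquiv n k).prodCongr (Finsupp.linearEquivFunOnFinite A N _)).symm ≪≫ₗ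
    f ≪≫ₗ finsuppFinProdEquiv (n + m) k⟩

end BaseChange
end
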